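/- Let X be a real Banach space and Φ : X → ℝ a C¹ functional satisfying the Palais–Smale condition (P.S.). If Φ has two distinct local minima u₁ ≠ u₂ (or two distinct local maxima), then Φ possesses a third critical point: there exists u₃ ∈ X with u₃ ≠ u₁, u₃ ≠ u₂ and Φ'(u₃) = 0. -/

import Mathlib

open Set Filter

open scoped Topology

/-!
Suppose `Φ u₂ ≤ Φ u₁` with `u₁` a local minimum. If a small sphere around `u₁` carries no critical
point, then Ekeland's principle near the sphere and the Palais–Smale condition show that `Φ` is
bounded below there by some `b > Φ u₁`: otherwise almost minimizers on the sphere would be close to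
almost critical points, hence accumulate at a critical point of the sphere. Every path from `u₁` to
`u₂` crosses the sphere, so this is a mountain pass. Ekeland's principle, now applied to
`γ ↦ max Φ ∘ γ` on the space of paths, yields almost critical points at levels at least `b`, which
accumulate at a critical point `u₃` with `Φ u₃ ≥ b > Φ u₁ ≥ Φ u₂`. Local maxima are handled by
passing to `-Φ`.
-/

section Ekeland

variable {α : Type*} [PseudoMetricSpace α] {F : α → ℝ} {ε : ℝ} {x y : α}

/-- The lower set of `x` for Ekeland's preorder, in which `z` lies below `x` when going from `x` to
`z` decreases `F` by at least `ε` times the distance travelled. -/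
def ekelandLowerSet (F : α → ℝ) (ε : ℝ) (x : α) : Set α :=
  {z | F z + ε * dist x z ≤ F x}

lemma self_mem_ekelandLowerSet (F : α → ℝ) (ε : ℝ) (x : α) : x ∈ ekelandLowerSet F ε x := by
  simp [ekelandLowerSet]

lemma ekelandLowerSet_subset_of_mem (hε : 0 ≤ ε) (hy : y ∈ ekelandLowerSet F ε x) :
    ekelandLowerSet F ε y ⊆ ekelandLowerSet F ε x := fun z hz =>
  calc F z + ε * dist x z
      ≤ F z + ε * (dist x y + dist y z) := by gcongr; exact dist_triangle x y z
    _ = (F z + ε * dist y z) + ε * dist x y := by ring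
    _ ≤ F y + ε * dist x y := by gcongr; exact hz
    _ ≤ F x := hy

lemma isClosed_ekelandLowerSet (hF : LowerSemicontinuous F) (ε : ℝ) (x : α) :
    IsClosed (ekelandLowerSet F ε x) :=
  (hF.add (Continuous.lowerSemicontinuous (by fun_prop))).isClosed_preimage (F x)

lemma exists_mem_ekelandLowerSet_almost_minimal (hF : BddBelow (range F)) (hε : 0 ≤ ε) (x : α)
    {δ : ℝ} (hδ : 0 < δ) :
    ∃ y ∈ ekelandLowerSet F ε x, ∀ z ∈ ekelandLowerSet F ε y, F y ≤ F z + δ := by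
  have hne : (F '' ekelandLowerSet F ε x).Nonempty := ⟨F x, x, self_mem_ekelandLowerSet F ε x, rfl⟩
  obtain ⟨_, ⟨y, hy, rfl⟩, hlt⟩ := exists_lt_of_csInf_lt hne (lt_add_of_pos_right _ hδ)
  refine ⟨y, hy, fun z hz => hlt.le.trans ?_⟩
  gcongr
  exact csInf_le (hF.mono (image_subset_range _ _))
    (mem_image_of_mem F (ekelandLowerSet_subset_of_mem hε hy hz))

theorem ekeland_variational_principle [CompleteSpace α] (hF : LowerSemicontinuous F)
    (hbdd : BddBelow (range F)) (hε : 0 < ε) (x : α) :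
    ∃ y, F y + ε * dist x y ≤ F x ∧ ∀ z, F y ≤ F z + ε * dist y z := by
  choose g hg_mem hg_min using fun (n : ℕ) (x : α) =>
    exists_mem_ekelandLowerSet_almost_minimal hbdd hε.le x (δ := (1 / 2) ^ n) (by positivity)
  let u : ℕ → α := Nat.rec (g 0 x) fun n z => g (n + 1) z
  have hu_min : ∀ n, ∀ z ∈ ekelandLowerSet F ε (u n), F (u n) ≤ F z + (1 / 2) ^ n
    | 0 => hg_min 0 x
    | n + 1 => hg_min (n + 1) (u n)
  have hu_anti : Antitone fun n => ekelandLowerSet F ε (u n) :=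
    antitone_nat_of_succ_le fun n => ekelandLowerSet_subset_of_mem hε.le (hg_mem (n + 1) (u n))
  have hu_mem {n m : ℕ} (hnm : n ≤ m) : u m ∈ ekelandLowerSet F ε (u n) :=
    hu_anti hnm (self_mem_ekelandLowerSet F ε (u m))
  have hhalf : Tendsto (fun n : ℕ => (1 / 2 : ℝ) ^ n) atTop (𝓝 0) :=
    tendsto_pow_atTop_nhds_zero_of_lt_one (by norm_num) (by norm_num)
  have hu_cauchy : CauchySeq u := by
    refine cauchySeq_of_le_tendsto_0' (fun n => (1 / 2) ^ n / ε) (fun n m hnm => ?_)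
      (by simpa only [zero_div] using hhalf.div_const ε)
    have hdec : F (u m) + ε * dist (u n) (u m) ≤ F (u n) := hu_mem hnm
    rw [le_div_iff₀' hε]
    linarith [hu_min n (u m) (hu_mem hnm)]
  obtain ⟨y, hy⟩ := cauchySeq_tendsto_of_complete hu_cauchy
  have hy_mem (n : ℕ) : y ∈ ekelandLowerSet F ε (u n) :=
    (isClosed_ekelandLowerSet hF ε (u n)).mem_of_tendsto hy
      ((eventually_ge_atTop n).mono fun _ => hu_mem)
  refine ⟨y, ekelandLowerSet_subset_of_mem hε.le (hg_mem 0 x) (hy_mem 0), fun z => ?_⟩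
  by_contra! hz
  have hyz (n : ℕ) : F y ≤ F z + (1 / 2) ^ n := by
    have hdec : F y + ε * dist (u n) y ≤ F (u n) := hy_mem n
    have hnonneg : 0 ≤ ε * dist (u n) y := by positivity
    linarith [hu_min n z (ekelandLowerSet_subset_of_mem hε.le (hy_mem n) hz.le)]
  have hyz_le : F y ≤ F z + 0 := ge_of_tendsto' (hhalf.const_add _) hyz
  have hnonneg : 0 ≤ ε * dist y z := by positivity
  linarith

end Ekeland

section AlmostCritical

variable {X : Type*} [NormedAddCommGroup X] [NormedSpace ℝ X]

lemma exists_norm_le_one_apply_lt_neg {f : X →L[ℝ] ℝ} {ε : ℝ} (hf : ε < ‖f‖) :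
    ∃ v, ‖v‖ ≤ 1 ∧ f v < -ε := by
  obtain ⟨v, hv, hfv⟩ := f.exists_lt_apply_of_lt_opNorm hf
  rcases lt_abs.1 hfv with h | h
  · exact ⟨-v, by simpa only [norm_neg] using hv.le,
      by simpa only [map_neg, neg_lt_neg_iff] using h⟩
  · exact ⟨v, hv.le, lt_neg_of_lt_neg h⟩

lemma norm_le_of_eventually_le_add_mul_dist {Φ : X → ℝ} {f : X →L[ℝ] ℝ} {y : X} {ε : ℝ}
    (hf : HasFDerivAt Φ f y) (hε : 0 ≤ ε) (h : ∀ᶠ z in 𝓝 y, Φ y ≤ Φ z + ε * dist y z) :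
    ‖f‖ ≤ ε := by
  by_contra! hlt
  obtain ⟨v, hv, hfv⟩ := exists_norm_le_one_apply_lt_neg hlt
  have hline : Tendsto (fun t : ℝ => y + t • v) (𝓝[>] 0) (𝓝 y) :=
    (Continuous.tendsto' (by fun_prop) 0 y (by simp)).mono_left nhdsWithin_le_nhds
  refine hfv.not_ge (ge_of_tendsto (hf.hasLineDerivAt v).tendsto_slope_zero_right ?_)
  filter_upwards [hline.eventually h, self_mem_nhdsWithin] with t ht (ht₀ : 0 < t)
  have hdist : ε * dist y (y + t • v) ≤ ε * t := by
    rw [dist_self_add_right, norm_smul, Real.norm_of_nonneg ht₀.le]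
    gcongr
    exact mul_le_of_le_one_right ht₀.le hv
  rw [smul_eq_mul, ← div_eq_inv_mul, le_div_iff₀ ht₀]
  linarith

theorem exists_mem_ball_norm_le_of_lt_add_mul [CompleteSpace X] {Φ : X → ℝ} {Φ' : X → X →L[ℝ] ℝ}
    (hderiv : ∀ x, HasFDerivAt Φ (Φ' x) x) {x : X} {m δ ε : ℝ} (hδ : 0 ≤ δ) (hε : 0 < ε)
    (hm : ∀ z ∈ Metric.closedBall x δ, m ≤ Φ z) (hx : Φ x < m + ε * δ) :
    ∃ y ∈ Metric.ball x δ, Φ y ≤ Φ x ∧ ‖Φ' y‖ ≤ ε := by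
  have hΦ : Continuous Φ := continuous_iff_continuousAt.2 fun z => (hderiv z).continuousAt
  have : CompleteSpace (Metric.closedBall x δ) :=
    Metric.isClosed_closedBall.isComplete.completeSpace_coe
  obtain ⟨⟨y, hy⟩, hyx, hmin⟩ := ekeland_variational_principle
    (F := fun z : Metric.closedBall x δ => Φ z) (hΦ.comp continuous_subtype_val).lowerSemicontinuous
    ⟨m, by rintro _ ⟨z, rfl⟩; exact hm z z.2⟩ hε ⟨x, Metric.mem_closedBall_self hδ⟩
  simp only [Subtype.dist_eq, Subtype.forall] at hyx hmin
  have hyx_dist : dist x y < δ := lt_of_mul_lt_mul_left (by linarith [hm y hy]) hε.le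
  have hyball : y ∈ Metric.ball x δ := Metric.mem_ball'.2 hyx_dist
  have hnonneg : 0 ≤ ε * dist x y := by positivity
  refine ⟨y, hyball, by linarith, norm_le_of_eventually_le_add_mul_dist (hderiv y) hε.le ?_⟩
  filter_upwards [Metric.isOpen_ball.mem_nhds hyball] with z hz
  exact hmin z (Metric.ball_subset_closedBall hz)

end AlmostCritical

section PalaisSmale

variable {X : Type*} [NormedAddCommGroup X] [NormedSpace ℝ X] {Φ : X → ℝ} {Φ' : X → X →L[ℝ] ℝ}

/-- The Palais–Smale compactness condition for a functional `Φ`, whose derivative `Φ'` is passed as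
a separate argument. -/
def PalaisSmale (Φ : X → ℝ) (Φ' : X → X →L[ℝ] ℝ) : Prop :=
  ∀ u : ℕ → X, (∃ M : ℝ, ∀ n, |Φ (u n)| ≤ M) → Tendsto (fun n => ‖Φ' (u n)‖) atTop (𝓝 0) →
    ∃ φ : ℕ → ℕ, StrictMono φ ∧ ∃ v : X, Tendsto (u ∘ φ) atTop (𝓝 v)

namespace PalaisSmale

lemma neg (hPS : PalaisSmale Φ Φ') : PalaisSmale (-Φ) (-Φ') := by
  simpa only [PalaisSmale, Pi.neg_apply, abs_neg, norm_neg] using hPS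

lemma exists_subseq_tendsto_critical (hPS : PalaisSmale Φ Φ') (hcont : Continuous Φ') {y : ℕ → X}
    {a b : ℝ} (hy : ∀ n, Φ (y n) ∈ Icc a b) {e : ℕ → ℝ} (he : Tendsto e atTop (𝓝 0))
    (hye : ∀ n, ‖Φ' (y n)‖ ≤ e n) :
    ∃ φ : ℕ → ℕ, StrictMono φ ∧ ∃ v, Tendsto (y ∘ φ) atTop (𝓝 v) ∧ Φ' v = 0 := by
  have hy_zero : Tendsto (fun n => Φ' (y n)) atTop (𝓝 0) := squeeze_zero_norm hye he
  obtain ⟨φ, hφ, v, hv⟩ :=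
    hPS y ⟨_, fun n => abs_le_max_abs_abs (hy n).1 (hy n).2⟩ (by simpa using hy_zero.norm)
  exact ⟨φ, hφ, v, hv, tendsto_nhds_unique ((hcont.tendsto v).comp hv)
    (hy_zero.comp hφ.tendsto_atTop)⟩

theorem exists_lt_forall_mem_le [CompleteSpace X] (hPS : PalaisSmale Φ Φ')
    (hderiv : ∀ x, HasFDerivAt Φ (Φ' x) x) (hcont : Continuous Φ') {S : Set X} (hS : IsClosed S)
    {m δ : ℝ} (hδ : 0 < δ) (hm : ∀ x ∈ Metric.cthickening δ S, m ≤ Φ x)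
    (hcrit : ∀ x ∈ S, Φ' x ≠ 0) :
    ∃ b, m < b ∧ ∀ x ∈ S, b ≤ Φ x := by
  by_contra! hlow
  let e : ℕ → ℝ := fun n => δ * (1 / ((n : ℝ) + 1))
  have he_pos (n : ℕ) : 0 < e n := by positivity
  have he_le (n : ℕ) : e n ≤ δ := mul_le_of_le_one_right hδ.le <| by
    simpa only [Nat.cast_zero, zero_add, div_one] using Nat.one_div_le_one_div (α := ℝ) n.zero_le
  have he : Tendsto e atTop (𝓝 0) := by
    simpa only [mul_zero] using tendsto_one_div_add_atTop_nhds_zero_nat.const_mul δ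
  choose x hxS hx using fun n => hlow (m + e n * e n) (by have := he_pos n; nlinarith)
  have hball (n : ℕ) : Metric.closedBall (x n) (e n) ⊆ Metric.cthickening δ S :=
    (Metric.closedBall_subset_closedBall (he_le n)).trans
      (Metric.closedBall_subset_cthickening (hxS n) δ)
  choose y hyx hyΦ hye using fun n => exists_mem_ball_norm_le_of_lt_add_mul hderiv (he_pos n).le
    (he_pos n) (fun z hz => hm z (hball n hz)) (hx n)
  have hy_Icc (n : ℕ) : Φ (y n) ∈ Icc m (m + δ * δ) := by
    refine ⟨hm _ (hball n (Metric.ball_subset_closedBall (hyx n))),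
      (hyΦ n).trans ((hx n).le.trans ?_)⟩
    gcongr <;> exact he_le n
  obtain ⟨φ, hφ, v, hv, hv_crit⟩ := hPS.exists_subseq_tendsto_critical hcont hy_Icc he hye
  have hdist : Tendsto (fun n => dist (y n) (x n)) atTop (𝓝 0) :=
    squeeze_zero (fun _ => dist_nonneg) (fun n => (Metric.mem_ball.1 (hyx n)).le) he
  have hxv : Tendsto (x ∘ φ) atTop (𝓝 v) :=
    (tendsto_iff_of_dist (hdist.comp hφ.tendsto_atTop)).1 hv
  exact hcrit v (hS.mem_of_tendsto hxv (Eventually.of_forall fun n => hxS (φ n))) hv_crit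

end PalaisSmale

end PalaisSmale

section DescentField

variable {K X : Type*} [TopologicalSpace K] [NormedAddCommGroup X] [NormedSpace ℝ X] {Φ : X → ℝ}
  {Φ' : X → X →L[ℝ] ℝ} {ε : ℝ}

lemma exists_continuous_apply_lt_neg [NormalSpace K] [ParacompactSpace K] {A : K → X →L[ℝ] ℝ}
    (hA : Continuous A) {M K₀ : Set K} (hM : IsClosed M) (hK₀ : IsClosed K₀)
    (hdisj : Disjoint M K₀) (hA_norm : ∀ t ∈ M, ε < ‖A t‖) :
    ∃ v : C(K, X), (∀ t, ‖v t‖ ≤ 1) ∧ (∀ t ∈ M, A t (v t) < -ε) ∧ EqOn v 0 K₀ := by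
  let D : K → Set X := fun t => {w | ‖w‖ ≤ 1 ∧ (t ∈ M → A t w < -ε) ∧ (t ∈ K₀ → w = 0)}
  have hD_convex (t : K) : Convex ℝ (D t) := by
    rintro w ⟨hw, hwM, hwK⟩ w' ⟨hw', hwM', hwK'⟩ a c ha hc hac
    refine ⟨?_, fun ht => ?_, fun ht => ?_⟩
    · rw [← mem_closedBall_zero_iff] at hw hw' ⊢
      exact convex_closedBall 0 1 hw hw' ha hc hac
    · exact convex_halfSpace_lt (A t).isLinear (-ε) (hwM ht) (hwM' ht) ha hc hac
    · rw [hwK ht, hwK' ht, smul_zero, smul_zero, add_zero]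
  have hD_local (t : K) : ∃ w, ∀ᶠ s in 𝓝 t, w ∈ D s := by
    by_cases ht : t ∈ M
    · obtain ⟨w, hw, hAw⟩ := exists_norm_le_one_apply_lt_neg (hA_norm t ht)
      have hcont : Continuous fun s => A s w := by fun_prop
      refine ⟨w, ?_⟩
      filter_upwards [hcont.continuousAt.eventually_lt continuousAt_const hAw,
        hK₀.isOpen_compl.mem_nhds (hdisj.notMem_of_mem_left ht)] with s hs hsK
      exact ⟨hw, fun _ => hs, fun h => (hsK h).elim⟩
    · refine ⟨0, ?_⟩
      filter_upwards [hM.isOpen_compl.mem_nhds ht] with s hs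
      exact ⟨by simp, fun h => (hs h).elim, fun _ => rfl⟩
  obtain ⟨v, hv⟩ := exists_continuous_forall_mem_convex_of_local_const hD_convex hD_local
  exact ⟨v, fun t => (hv t).1, fun t => (hv t).2.1, fun t => (hv t).2.2⟩

lemma exists_sub_eq_mul_fderiv_apply (hderiv : ∀ x, HasFDerivAt Φ (Φ' x) x) (x v : X) {h : ℝ}
    (hh : 0 < h) : ∃ r ∈ Ioo 0 h, Φ (x + h • v) - Φ x = h * Φ' (x + r • v) v := by
  have hray (r : ℝ) : HasDerivAt (fun r : ℝ => Φ (x + r • v)) (Φ' (x + r • v) v) r :=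
    (hderiv _).comp_hasDerivAt r
      (by simpa only [one_smul] using ((hasDerivAt_id' r).smul_const v).const_add x)
  obtain ⟨r, hr, hslope⟩ := exists_hasDerivAt_eq_slope _ _ hh
    (fun r _ => (hray r).continuousAt.continuousWithinAt) fun r _ => hray r
  refine ⟨r, hr, ?_⟩
  rw [hslope, sub_zero, mul_div_cancel₀ _ hh.ne', zero_smul, add_zero]

lemma eventually_lt_sub_mul_of_apply_lt_neg (hderiv : ∀ x, HasFDerivAt Φ (Φ' x) x)
    (hcont : Continuous Φ') (γ v : C(K, X)) {t : K} (ht : Φ' (γ t) (v t) < -ε) :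
    ∀ᶠ p : ℝ × K in 𝓝 (0, t),
      0 < p.1 → Φ (γ p.2 + p.1 • v p.2) < Φ (γ p.2) - ε * p.1 := by
  have hcont_slope : Continuous fun p : ℝ × K => Φ' (γ p.2 + p.1 • v p.2) (v p.2) := by fun_prop
  have hneg : ∀ᶠ p : ℝ × K in 𝓝 0 ×ˢ 𝓝 t, Φ' (γ p.2 + p.1 • v p.2) (v p.2) < -ε := by
    rw [← nhds_prod_eq]
    exact hcont_slope.continuousAt.eventually_lt continuousAt_const
      (by simpa only [zero_smul, add_zero] using ht)
  obtain ⟨P, hP, Q, hQ, hPQ⟩ := eventually_prod_iff.1 hneg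
  obtain ⟨δ, hδ, hδP⟩ := Metric.eventually_nhds_iff.1 hP
  rw [nhds_prod_eq]
  filter_upwards [prod_mem_prod (Metric.ball_mem_nhds 0 hδ) hQ] with ⟨h, s⟩ ⟨hhδ, hs⟩ hh
  obtain ⟨r, ⟨hr₀, hrh⟩, hr_eq⟩ := exists_sub_eq_mul_fderiv_apply hderiv (γ s) (v s) hh
  have hrδ : dist r 0 < δ := by
    rw [Real.dist_0_eq_abs, abs_of_pos hr₀]
    exact hrh.trans ((le_abs_self h).trans_lt (mem_ball_zero_iff.1 hhδ))
  have hslope : h * Φ' (γ s + r • v s) (v s) < h * -ε :=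
    mul_lt_mul_of_pos_left (hPQ (hδP hrδ) hs) hh
  simp only at hh ⊢
  linarith

end DescentField

section Minimax

variable {K X : Type*} [TopologicalSpace K]

/-- The largest value of `Φ` along the compact family `γ`, which minimax arguments minimize over
`γ`. It is meant for continuous `Φ` and compact `K`, where the supremum is attained. -/
noncomputable def supAlong [TopologicalSpace X] (Φ : X → ℝ) (γ : C(K, X)) : ℝ := ⨆ t, Φ (γ t)

section Topological

variable [TopologicalSpace X] [CompactSpace K] {Φ : X → ℝ}

lemma bddAbove_range_comp (hΦ : Continuous Φ) (γ : C(K, X)) :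
    BddAbove (range fun t => Φ (γ t)) :=
  (isCompact_range (hΦ.comp γ.continuous)).bddAbove

lemma le_supAlong (hΦ : Continuous Φ) (γ : C(K, X)) (t : K) : Φ (γ t) ≤ supAlong Φ γ :=
  le_ciSup (bddAbove_range_comp hΦ γ) t

lemma exists_eq_supAlong [Nonempty K] (hΦ : Continuous Φ) (γ : C(K, X)) :
    ∃ t, Φ (γ t) = supAlong Φ γ :=
  (isCompact_range (hΦ.comp γ.continuous)).sSup_mem (range_nonempty _)

lemma lowerSemicontinuous_supAlong (hΦ : Continuous Φ) :
    LowerSemicontinuous (supAlong Φ : C(K, X) → ℝ) :=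
  lowerSemicontinuous_ciSup (bddAbove_range_comp hΦ) fun t =>
    (hΦ.comp (continuous_eval_const t)).lowerSemicontinuous

end Topological

lemma exists_supAlong_le_forall_le_add_mul_dist [MetricSpace X] [CompleteSpace X] [CompactSpace K]
    {Φ : X → ℝ} (hΦ : Continuous Φ) {K₀ : Set K} {γ₀ : C(K, X)} {b ε : ℝ}
    (hb : ∀ γ : C(K, X), EqOn γ γ₀ K₀ → b ≤ supAlong Φ γ) (hε : 0 < ε) :
    ∃ γ : C(K, X), EqOn γ γ₀ K₀ ∧ supAlong Φ γ ≤ supAlong Φ γ₀ ∧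
      ∀ η : C(K, X), EqOn η γ₀ K₀ → supAlong Φ γ ≤ supAlong Φ η + ε * dist γ η := by
  let Γ : Set C(K, X) := {γ | EqOn γ γ₀ K₀}
  have hΓ : IsClosed Γ := by
    simp only [Γ, EqOn, ofPred_forall]
    exact isClosed_biInter fun t _ => isClosed_eq (continuous_eval_const t) continuous_const
  have : CompleteSpace Γ := hΓ.isComplete.completeSpace_coe
  obtain ⟨⟨γ, hγ⟩, hγ_le, hγ_min⟩ := ekeland_variational_principle
    ((lowerSemicontinuous_supAlong hΦ).comp continuous_subtype_val)
    ⟨b, by rintro _ ⟨γ, rfl⟩; exact hb γ γ.2⟩ hε (⟨γ₀, eqOn_refl _ _⟩ : Γ)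
  simp only [Subtype.dist_eq, Subtype.forall, Function.comp_apply] at hγ_le hγ_min
  have hnonneg : 0 ≤ ε * dist γ₀ γ := by positivity
  exact ⟨γ, hγ, by linarith, hγ_min⟩

variable [CompactSpace K] [NormedAddCommGroup X] [NormedSpace ℝ X] {Φ : X → ℝ}
  {Φ' : X → X →L[ℝ] ℝ} {ε : ℝ}

lemma eventually_supAlong_add_smul_lt [Nonempty K] (hderiv : ∀ x, HasFDerivAt Φ (Φ' x) x)
    (hcont : Continuous Φ') {γ v : C(K, X)}
    (hv : ∀ t, Φ (γ t) = supAlong Φ γ → Φ' (γ t) (v t) < -ε) :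
    ∀ᶠ h in 𝓝[>] (0 : ℝ), supAlong Φ (γ + h • v) < supAlong Φ γ - ε * h := by
  have hΦ : Continuous Φ := continuous_iff_continuousAt.2 fun x => (hderiv x).continuousAt
  have hlocal (t : K) : ∀ᶠ p : ℝ × K in 𝓝 (0, t),
      0 < p.1 → Φ (γ p.2 + p.1 • v p.2) < supAlong Φ γ - ε * p.1 := by
    rcases (le_supAlong hΦ γ t).eq_or_lt with ht | ht
    · filter_upwards [eventually_lt_sub_mul_of_apply_lt_neg hderiv hcont γ v (hv t ht)]
        with p hp hp₀
      linarith [hp hp₀, le_supAlong hΦ γ p.2]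
    · have hleft : Continuous fun p : ℝ × K => Φ (γ p.2 + p.1 • v p.2) := by fun_prop
      have hright : Continuous fun p : ℝ × K => supAlong Φ γ - ε * p.1 := by fun_prop
      exact (hleft.continuousAt.eventually_lt hright.continuousAt (by simpa using ht)).mono
        fun p hp _ => hp
  have hglobal := isCompact_univ.eventually_forall_of_forall_eventually
    (P := fun h t => 0 < h → Φ (γ t + h • v t) < supAlong Φ γ - ε * h) fun t _ => hlocal t
  filter_upwards [hglobal.filter_mono nhdsWithin_le_nhds, self_mem_nhdsWithin] with h hh hpos
  obtain ⟨t, ht⟩ := exists_eq_supAlong hΦ (γ + h • v)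
  exact ht ▸ hh t (mem_univ t) hpos

variable [T2Space K] [CompleteSpace X] {K₀ : Set K} {γ₀ : C(K, X)} {b : ℝ}

theorem exists_mem_Icc_norm_le_of_minimax (hderiv : ∀ x, HasFDerivAt Φ (Φ' x) x)
    (hcont : Continuous Φ') (hK₀ : IsClosed K₀) (hb₀ : ∀ t ∈ K₀, Φ (γ₀ t) < b)
    (hb : ∀ γ : C(K, X), EqOn γ γ₀ K₀ → ∃ t, b ≤ Φ (γ t)) (hε : 0 < ε) :
    ∃ y, Φ y ∈ Icc b (supAlong Φ γ₀) ∧ ‖Φ' y‖ ≤ ε := by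
  have hΦ : Continuous Φ := continuous_iff_continuousAt.2 fun x => (hderiv x).continuousAt
  have : Nonempty K := (hb γ₀ (eqOn_refl _ _)).nonempty
  have hb_le (γ : C(K, X)) (hγ : EqOn γ γ₀ K₀) : b ≤ supAlong Φ γ :=
    let ⟨t, ht⟩ := hb γ hγ
    ht.trans (le_supAlong hΦ γ t)
  obtain ⟨γ, hγ, hγ_le, hγ_min⟩ := exists_supAlong_le_forall_le_add_mul_dist hΦ hb_le hε
  let M : Set K := {t | Φ (γ t) = supAlong Φ γ}
  have hM : IsClosed M := isClosed_eq (by fun_prop) continuous_const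
  have hdisj : Disjoint M K₀ := disjoint_left.2 fun t (ht : Φ (γ t) = _) htK =>
    (hb₀ t htK).not_ge (hγ htK ▸ ht ▸ hb_le γ hγ)
  by_contra! hlarge
  obtain ⟨v, hv_norm, hvM, hvK⟩ := exists_continuous_apply_lt_neg
    (A := fun t => Φ' (γ t)) (by fun_prop) hM hK₀ hdisj
    fun t (ht : Φ (γ t) = _) => hlarge (γ t) (ht ▸ ⟨hb_le γ hγ, hγ_le⟩)
  obtain ⟨h, hlt, hpos : 0 < h⟩ :=
    ((eventually_supAlong_add_smul_lt hderiv hcont hvM).and self_mem_nhdsWithin).exists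
  have hdist : ε * dist γ (γ + h • v) ≤ ε * h := by
    rw [dist_self_add_right, norm_smul, Real.norm_of_nonneg hpos.le]
    gcongr
    exact mul_le_of_le_one_right hpos.le ((ContinuousMap.norm_le _ zero_le_one).2 hv_norm)
  have hmem : EqOn (γ + h • v) γ₀ K₀ := fun t ht => by simp [hvK ht, hγ ht]
  linarith [hγ_min _ hmem]

theorem PalaisSmale.exists_critical_of_minimax (hPS : PalaisSmale Φ Φ')
    (hderiv : ∀ x, HasFDerivAt Φ (Φ' x) x) (hcont : Continuous Φ') (hK₀ : IsClosed K₀)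
    (hb₀ : ∀ t ∈ K₀, Φ (γ₀ t) < b)
    (hb : ∀ γ : C(K, X), EqOn γ γ₀ K₀ → ∃ t, b ≤ Φ (γ t)) :
    ∃ v, Φ' v = 0 ∧ b ≤ Φ v := by
  choose y hyΦ hy using fun n : ℕ => exists_mem_Icc_norm_le_of_minimax hderiv hcont hK₀ hb₀ hb
    (Nat.one_div_pos_of_nat (α := ℝ) (n := n))
  obtain ⟨φ, -, v, hv, hv_crit⟩ :=
    hPS.exists_subseq_tendsto_critical hcont hyΦ tendsto_one_div_add_atTop_nhds_zero_nat hy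
  exact ⟨v, hv_crit, ge_of_tendsto' ((hderiv v).continuousAt.tendsto.comp hv) fun n => (hyΦ _).1⟩

end Minimax

section ThreeCriticalPoints

variable {X : Type*} [NormedAddCommGroup X] [NormedSpace ℝ X] [CompleteSpace X] {Φ : X → ℝ}
  {Φ' : X → X →L[ℝ] ℝ} {u₁ u₂ : X}

theorem PalaisSmale.exists_critical_of_mountain_pass (hPS : PalaisSmale Φ Φ')
    (hderiv : ∀ x, HasFDerivAt Φ (Φ' x) x) (hcont : Continuous Φ') {r b : ℝ} (hr : 0 ≤ r)
    (hu : r ≤ dist u₂ u₁) (h₁ : Φ u₁ < b) (h₂ : Φ u₂ < b)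
    (hb : ∀ x ∈ Metric.sphere u₁ r, b ≤ Φ x) :
    ∃ v, Φ' v = 0 ∧ b ≤ Φ v := by
  let γ₀ : C(unitInterval, X) := ⟨fun t => AffineMap.lineMap u₁ u₂ (t : ℝ), by fun_prop⟩
  have hγ₀_zero : γ₀ 0 = u₁ := by simp [γ₀]
  have hγ₀_one : γ₀ 1 = u₂ := by simp [γ₀]
  refine hPS.exists_critical_of_minimax (K₀ := {0, 1}) (γ₀ := γ₀) hderiv hcont
    (toFinite _).isClosed (by simp [hγ₀_zero, hγ₀_one, h₁, h₂]) fun γ hγ => ?_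
  have hγ_zero : γ 0 = u₁ := (hγ (mem_insert 0 {1})).trans hγ₀_zero
  have hγ_one : γ 1 = u₂ := (hγ (mem_insert_of_mem 0 rfl)).trans hγ₀_one
  obtain ⟨t, ht⟩ := mem_range_of_exists_le_of_exists_ge (c := r) (f := fun t => dist (γ t) u₁)
    (by fun_prop) ⟨0, by simpa [hγ_zero] using hr⟩ ⟨1, by simpa [hγ_one] using hu⟩
  exact ⟨t, hb _ ht⟩

theorem PalaisSmale.exists_third_critical_of_isLocalMin (hPS : PalaisSmale Φ Φ')
    (hderiv : ∀ x, HasFDerivAt Φ (Φ' x) x) (hcont : Continuous Φ') (hne : u₁ ≠ u₂)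
    (hmin : IsLocalMin Φ u₁) (hle : Φ u₂ ≤ Φ u₁) :
    ∃ u₃, u₃ ≠ u₁ ∧ u₃ ≠ u₂ ∧ Φ' u₃ = 0 := by
  obtain ⟨R, hR, hR_min⟩ := Metric.eventually_nhds_iff_ball.1 hmin
  obtain ⟨r, hr, hr_lt⟩ := exists_between (lt_min (half_pos hR) (dist_pos.2 hne.symm))
  obtain ⟨hrR, hr_dist⟩ := lt_min_iff.1 hr_lt
  by_cases hcrit : ∀ x ∈ Metric.sphere u₁ r, Φ' x ≠ 0
  · have hthick : Metric.cthickening r (Metric.sphere u₁ r) ⊆ Metric.ball u₁ R := by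
      refine (Metric.cthickening_subset_of_subset r Metric.sphere_subset_closedBall).trans ?_
      rw [cthickening_closedBall hr.le hr.le]
      exact Metric.closedBall_subset_ball (by linarith)
    obtain ⟨b, hb, hb_sphere⟩ := hPS.exists_lt_forall_mem_le hderiv hcont Metric.isClosed_sphere hr
      (fun x hx => hR_min x (hthick hx)) hcrit
    obtain ⟨v, hv, hbv⟩ := hPS.exists_critical_of_mountain_pass hderiv hcont hr.le hr_dist.le hb
      (hle.trans_lt hb) hb_sphere
    exact ⟨v, by rintro rfl; exact hbv.not_gt hb, by rintro rfl; linarith, hv⟩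
  · push Not at hcrit
    obtain ⟨v, hv_sphere, hv⟩ := hcrit
    rw [Metric.mem_sphere] at hv_sphere
    exact ⟨v, by rintro rfl; exact hr.ne (dist_self v ▸ hv_sphere),
      by rintro rfl; exact hr_dist.ne' hv_sphere, hv⟩

end ThreeCriticalPoints

theorem pucci_serrin_three_critical_points_general
    {X : Type*} [NormedAddCommGroup X] [NormedSpace ℝ X] [CompleteSpace X]
    (Φ : X → ℝ) (Φ' : X → (X →L[ℝ] ℝ))
    (hderiv : ∀ x, HasFDerivAt Φ (Φ' x) x) (hcont : Continuous Φ') (hPS : PalaisSmale Φ Φ')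
    (u₁ u₂ : X) (hne : u₁ ≠ u₂)
    (hextremum : (IsLocalMin Φ u₁ ∧ Φ u₂ ≤ Φ u₁) ∨ (IsLocalMax Φ u₁ ∧ Φ u₁ ≤ Φ u₂)) :
    ∃ u₃ : X, u₃ ≠ u₁ ∧ u₃ ≠ u₂ ∧ Φ' u₃ = 0 := by
  rcases hextremum with ⟨hmin, hle⟩ | ⟨hmax, hle⟩
  · exact hPS.exists_third_critical_of_isLocalMin hderiv hcont hne hmin hle
  · simpa only [Pi.neg_apply, neg_eq_zero] using
      hPS.neg.exists_third_critical_of_isLocalMin (fun x => (hderiv x).neg) hcont.neg hne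
        hmax.neg (neg_le_neg hle)

/-- **Pucci–Serrin three critical points theorem.**
Let `X` be a real Banach space and `Φ : X → ℝ` a `C¹` functional satisfying the
Palais–Smale condition. If `Φ` has two distinct local minima (or two distinct
local maxima), then `Φ` possesses a third critical point. -/
theorem pucci_serrin_three_critical_points
    {X : Type*} [NormedAddCommGroup X] [NormedSpace ℝ X] [CompleteSpace X]
    (Φ : X → ℝ) (Φ' : X → (X →L[ℝ] ℝ))
    (hderiv : ∀ x, HasFDerivAt Φ (Φ' x) x) (hcont : Continuous Φ')
    -- Palais–Smale condition
    (hPS : ∀ u : ℕ → X, (∃ M : ℝ, ∀ n, |Φ (u n)| ≤ M) →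
      Tendsto (fun n => ‖Φ' (u n)‖) atTop (nhds 0) →
      ∃ φ : ℕ → ℕ, StrictMono φ ∧ ∃ v : X, Tendsto (u ∘ φ) atTop (nhds v))
    (u₁ u₂ : X) (hne : u₁ ≠ u₂)
    (hextrema : (IsLocalMin Φ u₁ ∧ IsLocalMin Φ u₂) ∨
      (IsLocalMax Φ u₁ ∧ IsLocalMax Φ u₂)) :
    ∃ u₃ : X, u₃ ≠ u₁ ∧ u₃ ≠ u₂ ∧ Φ' u₃ = 0 := by
  have hgeneral := pucci_serrin_three_critical_points_general Φ Φ' hderiv hcont hPS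
  grind [le_total (Φ u₁) (Φ u₂)]
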